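/- If a tensor sequence A_1, …, A_N generates a matrix-product unitary and is in canonical form, then for every k = 1, …, N: the matrix ρ̂^{(k)} is positive semidefinite with trace 1 (i.e., a normalized quantum state), and for every X ∈ 𝒮^{(k)} the matrix X̂ is Hermitian with trace 0. -/

import Mathlib

open Matrix Kronecker
open scoped ComplexOrder

noncomputable section

/-- The partial matrix product `A_k^{i_k j_k} ⋯ A_1^{i_1 j_1}` of a tensor sequence
(sites are 0-based: `A m` is the tensor of site `m+1`). -/
def mpoProd (d : ℕ) (D : ℕ → ℕ)
    (A : ∀ k : ℕ, Fin d → Fin d → Matrix (Fin (D (k + 1))) (Fin (D k)) ℂ) :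
    ∀ N : ℕ, (Fin N → Fin d) → (Fin N → Fin d) → Matrix (Fin (D N)) (Fin (D 0)) ℂ
  | 0, _, _ => 1
  | (N + 1), i, j =>
      A N (i (Fin.last N)) (j (Fin.last N)) *
        mpoProd d D A N (fun t => i t.castSucc) (fun t => j t.castSucc)

/-- The matrix-product operator generated by the tensor sequence, acting on `(ℂ^d)^{⊗N}`;
since `D 0 = D N = 1`, the `1 × 1` boundary matrix is identified with a scalar by
summing its entries. -/
def mpoOp (d : ℕ) (D : ℕ → ℕ)
    (A : ∀ k : ℕ, Fin d → Fin d → Matrix (Fin (D (k + 1))) (Fin (D k)) ℂ) (N : ℕ) :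
    Matrix (Fin N → Fin d) (Fin N → Fin d) ℂ :=
  Matrix.of fun i j => ∑ m, ∑ n, mpoProd d D A N i j m n

/-- `∑ i j j', M j' j • conj(A^{i j'}) ⊗ conj?  -- the building block
`Σ_{i,j,j'} (M)_{j'j} · conj(A^{ij'}) ⊗ A^{ij}` (Kronecker product, entrywise conjugate). -/
def Smat {d Dl Dr : ℕ} (A : Fin d → Fin d → Matrix (Fin Dl) (Fin Dr) ℂ)
    (M : Matrix (Fin d) (Fin d) ℂ) : Matrix (Fin Dl × Fin Dl) (Fin Dr × Fin Dr) ℂ :=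
  ∑ i, ∑ j, ∑ j', M j' j • (((A i j').map (starRingEnd ℂ)) ⊗ₖ (A i j))

/-- The transfer matrix `E^{(k+1)} = (1/d) Σ_{i,j} conj(A_k^{ij}) ⊗ A_k^{ij}`. -/
def Esite (d : ℕ) (D : ℕ → ℕ)
    (A : ∀ k : ℕ, Fin d → Fin d → Matrix (Fin (D (k + 1))) (Fin (D k)) ℂ) (k : ℕ) :
    Matrix (Fin (D (k + 1)) × Fin (D (k + 1))) (Fin (D k) × Fin (D k)) ℂ :=
  ((d : ℂ))⁻¹ • Smat (A k) 1

/-- `S_α^{(k+1)}`, where `α = 0` carries the extra `1/d` factor (there `σ 0 = 𝟙`). -/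
def Ssite (d : ℕ) (D : ℕ → ℕ)
    (A : ∀ k : ℕ, Fin d → Fin d → Matrix (Fin (D (k + 1))) (Fin (D k)) ℂ)
    (σ : Fin (d * d) → Matrix (Fin d) (Fin d) ℂ) (k : ℕ) (α : Fin (d * d)) :
    Matrix (Fin (D (k + 1)) × Fin (D (k + 1))) (Fin (D k) × Fin (D k)) ℂ :=
  (if (α : ℕ) = 0 then ((d : ℂ))⁻¹ else 1) • Smat (A k) (σ α)

/-- The product `S_{α_N}^{(N)} ⋯ S_{α_1}^{(1)}`. -/
def Schain (d : ℕ) (D : ℕ → ℕ)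
    (A : ∀ k : ℕ, Fin d → Fin d → Matrix (Fin (D (k + 1))) (Fin (D k)) ℂ)
    (σ : Fin (d * d) → Matrix (Fin d) (Fin d) ℂ) :
    ∀ N : ℕ, (Fin N → Fin (d * d)) →
      Matrix (Fin (D N) × Fin (D N)) (Fin (D 0) × Fin (D 0)) ℂ
  | 0, _ => 1
  | (N + 1), α =>
      Ssite d D A σ N (α (Fin.last N)) * Schain d D A σ N (fun t => α t.castSucc)

/-- `ρ^{(N)} = E^{(N)} ⋯ E^{(1)}`. -/
def rhoChain (d : ℕ) (D : ℕ → ℕ)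
    (A : ∀ k : ℕ, Fin d → Fin d → Matrix (Fin (D (k + 1))) (Fin (D k)) ℂ) :
    ∀ N : ℕ, Matrix (Fin (D N) × Fin (D N)) (Fin (D 0) × Fin (D 0)) ℂ
  | 0 => 1
  | (N + 1) => Esite d D A N * rhoChain d D A N

/-- `𝒮^{(N)}`: the real span of all products `S_{α_N}^{(N)} ⋯ S_{α_1}^{(1)}` with some
`α_t ≠ 0`. -/
def Sspan (d : ℕ) (D : ℕ → ℕ)
    (A : ∀ k : ℕ, Fin d → Fin d → Matrix (Fin (D (k + 1))) (Fin (D k)) ℂ)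
    (σ : Fin (d * d) → Matrix (Fin d) (Fin d) ℂ) (N : ℕ) :
    Submodule ℝ (Matrix (Fin (D N) × Fin (D N)) (Fin (D 0) × Fin (D 0)) ℂ) :=
  Submodule.span ℝ
    {M | ∃ α : Fin N → Fin (d * d), (∃ t, (α t : ℕ) ≠ 0) ∧ M = Schain d D A σ N α}

/-- Identification of a vector in `ℂ^D ⊗ ℂ^D` (here: a `D² × 1` matrix, the column index
ranging over the trivial type `Fin (D 0) × Fin (D 0)` with `D 0 = 1`) with a `D × D`
matrix. -/
def matHat {Dk D0 : ℕ} (M : Matrix (Fin Dk × Fin Dk) (Fin D0 × Fin D0) ℂ) :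
    Matrix (Fin Dk) (Fin Dk) ℂ :=
  Matrix.of fun m n => ∑ q, M (m, n) q

/-!
Under the identification of vectors with matrices, the site operator `Smat A M` becomes the map
`X ↦ ∑ i, Kᵢ (M ⊗ X) Kᵢᴴ`, where `Kᵢ` is the row of blocks `conj (A i j)`. It therefore preserves
Hermiticity and positivity whenever `M` is Hermitian or positive, and the same holds for products
over the first `k` sites.

Over all `N` sites the maps compose to a single one of this form, with the tensor product of the
weights and with the entries of the matrix-product operator as blocks. Unitarity then says that the
trace of the result is the product of the traces of the weights. A canonical site with the
trace-one weight `𝟙 / d` preserves the trace, so padding a shorter product with such sites gives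
the same formula for every `k ≤ N`. The weights of `ρ` have trace one, and a product in `𝒮` has
some weight of trace zero.
-/

section PiKronecker

variable {ι κ R : Type*} [Fintype ι]

/-- The tensor product `⨂ₜ M t` of a finite family of matrices, acting on functions `ι → κ`. -/
def piKronecker [CommMonoid R] (M : ι → Matrix κ κ R) : Matrix (ι → κ) (ι → κ) R :=
  of fun f g => ∏ t, M t (f t) (g t)

theorem trace_piKronecker [DecidableEq ι] [Fintype κ] [CommSemiring R] (M : ι → Matrix κ κ R) :
    (piKronecker M).trace = ∏ t, (M t).trace := by
  simp only [Matrix.trace, diag_apply, piKronecker, of_apply, Finset.prod_univ_sum,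
    Fintype.piFinset_univ]

theorem piKronecker_submatrix_snocEquiv [CommMonoid R] {N : ℕ} (M : Fin (N + 1) → Matrix κ κ R) :
    (piKronecker M).submatrix (Fin.snocEquiv fun _ => κ) (Fin.snocEquiv fun _ => κ) =
      M (Fin.last N) ⊗ₖ piKronecker fun t => M t.castSucc := by
  ext f g
  simp [piKronecker, Fin.prod_univ_castSucc, mul_comm]

end PiKronecker

section TransferMap

variable {ι κ ι' κ' l m n R : Type*} [Fintype ι] [Fintype κ] [Fintype ι'] [Fintype κ']
  [Fintype n]

/-- The transfer map of a site tensor `B`, weighted by a physical operator `M`: it sends `X` to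
`∑ i j j', M j' j • conj (B i j') X (B i j)ᵀ`, so that `Smat` is its matrix on vectorized `X`. -/
def transferMap [CommSemiring R] [StarRing R] (B : ι → κ → Matrix m n R) (M : Matrix κ κ R)
    (X : Matrix n n R) : Matrix m m R :=
  ∑ i, ∑ j, ∑ j', M j' j • ((B i j').map (starRingEnd R) * X * (B i j)ᵀ)

/-- The row of blocks `[conj (B j)]ⱼ`, the Kraus operator attached to one physical output. -/
def conjBlockRow [CommSemiring R] [StarRing R] (B : κ → Matrix m n R) : Matrix m (κ × n) R :=
  of fun a q => starRingEnd R (B q.1 a q.2)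

section CommSemiring

variable [CommSemiring R] [StarRing R]

theorem transferMap_eq_sum_conjBlockRow (B : ι → κ → Matrix m n R) (M : Matrix κ κ R)
    (X : Matrix n n R) :
    transferMap B M X = ∑ i, conjBlockRow (B i) * (M ⊗ₖ X) * (conjBlockRow (B i))ᴴ := by
  ext a b
  simp only [transferMap, conjBlockRow, Matrix.sum_apply, Matrix.smul_apply, smul_eq_mul, mul_apply,
    map_apply, transpose_apply, conjTranspose_apply, of_apply, kroneckerMap_apply,
    Fintype.sum_prod_type, starRingEnd_apply, star_star, Finset.mul_sum, Finset.sum_mul]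
  refine Finset.sum_congr rfl fun i _ => Finset.sum_congr rfl fun j _ => ?_
  rw [Finset.sum_comm]
  refine Finset.sum_congr rfl fun y _ => Finset.sum_congr rfl fun j' _ =>
    Finset.sum_congr rfl fun x _ => ?_
  ring

theorem isHermitian_transferMap (B : ι → κ → Matrix m n R) {M : Matrix κ κ R} {X : Matrix n n R}
    (hM : M.IsHermitian) (hX : X.IsHermitian) : (transferMap B M X).IsHermitian := by
  have hMX : (M ⊗ₖ X).IsHermitian := by
    rw [Matrix.IsHermitian, conjTranspose_kronecker, hM.eq, hX.eq]
  rw [transferMap_eq_sum_conjBlockRow]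
  exact isSelfAdjoint_sum _ fun i _ => isHermitian_mul_mul_conjTranspose _ hMX

theorem trace_transferMap [Fintype m] (B : ι → κ → Matrix m n R) (M : Matrix κ κ R)
    (X : Matrix n n R) :
    (transferMap B M X).trace =
      ∑ j, ∑ j', M j' j * ((∑ i, (B i j')ᴴ * B i j)ᵀ * X).trace := by
  have trace_term (i j j') : ((B i j').map (starRingEnd R) * X * (B i j)ᵀ).trace =
      (((B i j')ᴴ * B i j)ᵀ * X).trace := by
    rw [trace_mul_comm, ← Matrix.mul_assoc, transpose_mul]
    rfl
  simp only [transferMap, trace_sum, trace_smul, smul_eq_mul, trace_term, transpose_sum,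
    Matrix.sum_mul, Finset.mul_sum]
  exact Finset.sum_comm_cycle.symm

theorem trace_transferMap_of_isometry [Fintype m] [DecidableEq κ] [DecidableEq n]
    {B : ι → κ → Matrix m n R} (hB : ∀ j' j, ∑ i, (B i j')ᴴ * B i j = if j' = j then 1 else 0)
    (M : Matrix κ κ R) (X : Matrix n n R) : (transferMap B M X).trace = M.trace * X.trace := by
  have trace_block (j j' : κ) : ((if j' = j then (1 : Matrix n n R) else 0)ᵀ * X).trace =
      if j' = j then X.trace else 0 := by
    split_ifs <;> simp
  simp only [trace_transferMap, hB, trace_block, mul_ite, mul_zero, Finset.sum_ite_eq',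
    Finset.mem_univ, if_true, ← Finset.sum_mul]
  rfl

theorem trace_transferMap_of_canonical [Fintype m] [DecidableEq κ] [DecidableEq n]
    {B : ι → κ → Matrix m n R} {c : R} (hB : c • ∑ i, ∑ j, (B i j)ᴴ * B i j = 1)
    (X : Matrix n n R) : (transferMap B (c • 1) X).trace = X.trace := by
  calc (transferMap B (c • 1) X).trace
      = ((c • ∑ j, ∑ i, (B i j)ᴴ * B i j)ᵀ * X).trace := by
        simp [trace_transferMap, Matrix.one_apply, transpose_sum, Matrix.sum_mul, trace_sum,
          Finset.mul_sum]
    _ = X.trace := by rw [Finset.sum_comm, hB, transpose_one, Matrix.one_mul]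

theorem transferMap_transferMap [Fintype m] (A : ι → κ → Matrix l m R)
    (B : ι' → κ' → Matrix m n R) (M : Matrix κ κ R) (W : Matrix κ' κ' R) (X : Matrix n n R) :
    transferMap A M (transferMap B W X) =
      transferMap (fun (i : ι × ι') (j : κ × κ') => A i.1 j.1 * B i.2 j.2) (M ⊗ₖ W) X := by
  simp only [transferMap, Fintype.sum_prod_type, Matrix.mul_sum, Matrix.sum_mul, Finset.smul_sum,
    Matrix.mul_smul, Matrix.smul_mul, smul_smul, kroneckerMap_apply, Matrix.map_mul,
    transpose_mul, Matrix.mul_assoc]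
  refine Finset.sum_congr rfl fun i _ => ?_
  rw [Finset.sum_comm_cycle]
  exact Finset.sum_congr rfl fun i' _ => Finset.sum_congr rfl fun j _ => Finset.sum_comm

theorem transferMap_reindex (e : ι' ≃ ι) (f : κ' ≃ κ) (B : ι → κ → Matrix m n R)
    (M : Matrix κ κ R) (X : Matrix n n R) :
    transferMap (fun i j => B (e i) (f j)) (M.submatrix f f) X = transferMap B M X := by
  simp only [transferMap, submatrix_apply]
  rw [← e.sum_comp]
  refine Finset.sum_congr rfl fun i _ => ?_
  rw [← f.sum_comp]
  exact Finset.sum_congr rfl fun j _ =>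
    f.sum_comp fun j' => M j' (f j) • ((B (e i) j').map _ * X * (B (e i) (f j))ᵀ)

end CommSemiring

theorem posSemidef_transferMap [Finite m] [RCLike R] (B : ι → κ → Matrix m n R) {M : Matrix κ κ R}
    {X : Matrix n n R} (hM : M.PosSemidef) (hX : X.PosSemidef) :
    (transferMap B M X).PosSemidef := by
  rw [transferMap_eq_sum_conjBlockRow]
  exact posSemidef_sum _ fun i _ => (hM.kronecker hX).mul_mul_conjTranspose_same _

end TransferMap

section MatHat

variable {d Dl Dr D0 : ℕ}

theorem vec_transpose_matHat (X : Matrix (Fin Dr × Fin Dr) (Fin D0 × Fin D0) ℂ) :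
    vec (matHat X)ᵀ = X *ᵥ 1 := by
  ext
  simp [matHat, vec, mulVec, dotProduct]

theorem matHat_kronecker_mul (B C : Matrix (Fin Dl) (Fin Dr) ℂ)
    (X : Matrix (Fin Dr × Fin Dr) (Fin D0 × Fin D0) ℂ) :
    matHat ((B ⊗ₖ C) * X) = B * matHat X * Cᵀ := by
  apply transpose_injective
  rw [← vec_inj, vec_transpose_matHat, ← mulVec_mulVec, ← vec_transpose_matHat,
    kronecker_mulVec_vec]
  simp [transpose_mul, Matrix.mul_assoc]

/-- `matHat` as a linear map, so that it commutes with sums and acts on real spans. -/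
@[simps]
def matHatLinearMap (Dr D0 : ℕ) :
    Matrix (Fin Dr × Fin Dr) (Fin D0 × Fin D0) ℂ →ₗ[ℂ] Matrix (Fin Dr) (Fin Dr) ℂ where
  toFun := matHat
  map_add' X Y := by ext; simp [matHat, Finset.sum_add_distrib]
  map_smul' c X := by ext; simp [matHat, Finset.mul_sum]

theorem matHat_Smat_mul (A : Fin d → Fin d → Matrix (Fin Dl) (Fin Dr) ℂ)
    (M : Matrix (Fin d) (Fin d) ℂ) (X : Matrix (Fin Dr × Fin Dr) (Fin D0 × Fin D0) ℂ) :
    matHat (Smat A M * X) = transferMap A M (matHat X) := by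
  rw [← matHatLinearMap_apply]
  simp only [Smat, Matrix.sum_mul, Matrix.smul_mul, map_sum, map_smul, matHatLinearMap_apply,
    matHat_kronecker_mul, transferMap]

theorem matHat_one_of_eq_one (h : D0 = 1) :
    matHat (1 : Matrix (Fin D0 × Fin D0) (Fin D0 × Fin D0) ℂ) = 1 := by
  subst h
  ext a b
  simp [matHat, Matrix.one_apply, Subsingleton.elim a b]

theorem Smat_smul (A : Fin d → Fin d → Matrix (Fin Dl) (Fin Dr) ℂ) (c : ℂ)
    (M : Matrix (Fin d) (Fin d) ℂ) : Smat A (c • M) = c • Smat A M := by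
  simp only [Smat, Finset.smul_sum, smul_smul, Matrix.smul_apply, smul_eq_mul]

end MatHat

section TransferChain

variable {d : ℕ} {D : ℕ → ℕ}
  (A : ∀ k : ℕ, Fin d → Fin d → Matrix (Fin (D (k + 1))) (Fin (D k)) ℂ)

/-- The bond operator obtained from the trivial left boundary by applying the transfer maps of the
first `k` sites, weighted by `M 0, …, M (k - 1)`. -/
def transferChain : ∀ k : ℕ, (Fin k → Matrix (Fin d) (Fin d) ℂ) → Matrix (Fin (D k)) (Fin (D k)) ℂ
  | 0, _ => 1
  | k + 1, M => transferMap (A k) (M (Fin.last k)) (transferChain k fun t => M t.castSucc)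

theorem isHermitian_transferChain {k : ℕ} {M : Fin k → Matrix (Fin d) (Fin d) ℂ}
    (hM : ∀ t, (M t).IsHermitian) : (transferChain A k M).IsHermitian := by
  induction k with
  | zero => exact isHermitian_one
  | succ k ih => exact isHermitian_transferMap _ (hM _) (ih fun t => hM t.castSucc)

theorem posSemidef_transferChain {k : ℕ} {M : Fin k → Matrix (Fin d) (Fin d) ℂ}
    (hM : ∀ t, (M t).PosSemidef) : (transferChain A k M).PosSemidef := by
  induction k with
  | zero => exact PosSemidef.one
  | succ k ih => exact posSemidef_transferMap _ (hM _) (ih fun t => hM t.castSucc)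

theorem transferChain_eq_transferMap_mpoProd (k : ℕ) (M : Fin k → Matrix (Fin d) (Fin d) ℂ) :
    transferChain A k M = transferMap (mpoProd d D A k) (piKronecker M) 1 := by
  induction k with
  | zero => simp [transferChain, transferMap, mpoProd, piKronecker]
  | succ k ih =>
    rw [transferChain, ih, transferMap_transferMap, ← piKronecker_submatrix_snocEquiv,
      ← transferMap_reindex (Fin.snocEquiv fun _ => Fin d) (Fin.snocEquiv fun _ => Fin d)]
    simp only [mpoProd, Fin.snocEquiv_apply, Fin.snoc_last, Fin.snoc_castSucc]

variable {A}

theorem sum_conjTranspose_mpoProd_mul {N : ℕ} (hD0 : D 0 = 1) (hDN : D N = 1)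
    (hU : mpoOp d D A N ∈ unitaryGroup (Fin N → Fin d) ℂ) (j' j : Fin N → Fin d) :
    ∑ i, (mpoProd d D A N i j')ᴴ * mpoProd d D A N i j = if j' = j then 1 else 0 := by
  have : Unique (Fin (D 0)) := hD0 ▸ inferInstance
  have : Unique (Fin (D N)) := hDN ▸ inferInstance
  have unitary_entry := congrFun₂ (mem_unitaryGroup_iff'.1 hU) j' j
  ext a b
  obtain rfl := Subsingleton.elim a default
  obtain rfl := Subsingleton.elim b default
  have ite_entry : (if j' = j then (1 : Matrix (Fin (D 0)) (Fin (D 0)) ℂ) else 0) default default =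
      if j' = j then 1 else 0 := by
    split_ifs <;> simp
  rw [ite_entry]
  simpa [mul_apply, mpoOp, Matrix.sum_apply, Matrix.one_apply] using unitary_entry

theorem trace_transferChain_of_unitary {N : ℕ} (hD0 : D 0 = 1) (hDN : D N = 1)
    (hU : mpoOp d D A N ∈ unitaryGroup (Fin N → Fin d) ℂ)
    (M : Fin N → Matrix (Fin d) (Fin d) ℂ) :
    (transferChain A N M).trace = ∏ t, (M t).trace := by
  rw [transferChain_eq_transferMap_mpoProd,
    trace_transferMap_of_isometry (sum_conjTranspose_mpoProd_mul hD0 hDN hU), trace_piKronecker,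
    trace_one, Fintype.card_fin, hD0, Nat.cast_one, mul_one]

theorem trace_transferChain {N : ℕ} (hd : d ≠ 0) (hD0 : D 0 = 1) (hDN : D N = 1)
    (hU : mpoOp d D A N ∈ unitaryGroup (Fin N → Fin d) ℂ)
    (hcan : ∀ k < N, (d : ℂ)⁻¹ • ∑ i, ∑ j, (A k i j)ᴴ * A k i j = 1) {k : ℕ} (hk : k ≤ N)
    (M : Fin k → Matrix (Fin d) (Fin d) ℂ) :
    (transferChain A k M).trace = ∏ t, (M t).trace := by
  induction hk using Nat.decreasingInduction with
  | self => exact trace_transferChain_of_unitary hD0 hDN hU M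
  | of_succ k hk ih =>
    have trace_weight : ((d : ℂ)⁻¹ • (1 : Matrix (Fin d) (Fin d) ℂ)).trace = 1 := by simp [hd]
    simpa [transferChain, trace_transferMap_of_canonical (hcan k hk), Fin.prod_univ_castSucc,
      trace_weight] using ih (Fin.snoc M ((d : ℂ)⁻¹ • 1))

end TransferChain

section Chains

variable {d : ℕ} {D : ℕ → ℕ}
  (A : ∀ k : ℕ, Fin d → Fin d → Matrix (Fin (D (k + 1))) (Fin (D k)) ℂ)
  (σ : Fin (d * d) → Matrix (Fin d) (Fin d) ℂ)

/-- The weight `M` for which `Smat (A k) M` is `S_α`: this is `σ α`, divided by `d` if `α = 0`. -/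
def siteWeight (α : Fin (d * d)) : Matrix (Fin d) (Fin d) ℂ :=
  (if (α : ℕ) = 0 then (d : ℂ)⁻¹ else 1) • σ α

theorem matHat_Schain (hD0 : D 0 = 1) (k : ℕ) (α : Fin k → Fin (d * d)) :
    matHat (Schain d D A σ k α) = transferChain A k fun t => siteWeight σ (α t) := by
  induction k with
  | zero => exact matHat_one_of_eq_one hD0
  | succ k ih => rw [Schain, Ssite, ← Smat_smul, matHat_Smat_mul, ih, transferChain, siteWeight]

theorem matHat_rhoChain (hD0 : D 0 = 1) (k : ℕ) :
    matHat (rhoChain d D A k) = transferChain A k fun _ => (d : ℂ)⁻¹ • 1 := by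
  induction k with
  | zero => exact matHat_one_of_eq_one hD0
  | succ k ih => rw [rhoChain, Esite, ← Smat_smul, matHat_Smat_mul, ih, transferChain]

variable {σ}

theorem isHermitian_siteWeight (hσ0 : ∀ α : Fin (d * d), (α : ℕ) = 0 → σ α = 1)
    (hσherm : ∀ α : Fin (d * d), (α : ℕ) ≠ 0 → (σ α).IsHermitian) (α : Fin (d * d)) :
    (siteWeight σ α).IsHermitian := by
  by_cases hα : (α : ℕ) = 0
  · simp [siteWeight, hα, hσ0 α hα, Matrix.IsHermitian, conjTranspose_smul]
  · simpa [siteWeight, hα] using hσherm α hα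

theorem trace_siteWeight_eq_zero (hσtr : ∀ α : Fin (d * d), (α : ℕ) ≠ 0 → (σ α).trace = 0)
    {α : Fin (d * d)} (hα : (α : ℕ) ≠ 0) : (siteWeight σ α).trace = 0 := by
  rw [siteWeight, trace_smul, hσtr α hα, smul_zero]

/-- The real vector space of Hermitian matrices of trace zero. -/
def tracelessHermitian (n : Type*) [Fintype n] : Submodule ℝ (Matrix n n ℂ) :=
  selfAdjoint.submodule ℝ (Matrix n n ℂ) ⊓ LinearMap.ker (traceLinearMap n ℝ ℂ)

theorem mem_tracelessHermitian {n : Type*} [Fintype n] {X : Matrix n n ℂ} :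
    X ∈ tracelessHermitian n ↔ X.IsHermitian ∧ X.trace = 0 :=
  Iff.rfl

variable {A}

theorem Sspan_le_comap_tracelessHermitian {k : ℕ}
    (hS : ∀ α : Fin k → Fin (d * d), (∃ t, (α t : ℕ) ≠ 0) →
      matHat (Schain d D A σ k α) ∈ tracelessHermitian (Fin (D k))) :
    Sspan d D A σ k ≤ (tracelessHermitian (Fin (D k))).comap
      ((matHatLinearMap (D k) (D 0)).restrictScalars ℝ) := by
  rw [Sspan, Submodule.span_le]
  rintro _ ⟨α, hα, rfl⟩
  exact hS α hα

end Chains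

theorem stmt_3_general (N d : ℕ) (hd : d ≠ 0) (D : ℕ → ℕ) (hD0 : D 0 = 1) (hDN : D N = 1)
    (A : ∀ k : ℕ, Fin d → Fin d → Matrix (Fin (D (k + 1))) (Fin (D k)) ℂ)
    (σ : Fin (d * d) → Matrix (Fin d) (Fin d) ℂ)
    (hσ0 : ∀ α : Fin (d * d), (α : ℕ) = 0 → σ α = 1)
    (hσherm : ∀ α : Fin (d * d), (α : ℕ) ≠ 0 → (σ α).IsHermitian)
    (hσtr : ∀ α : Fin (d * d), (α : ℕ) ≠ 0 → (σ α).trace = 0)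
    (hU : mpoOp d D A N ∈ Matrix.unitaryGroup (Fin N → Fin d) ℂ)
    (hcan : ∀ k, k < N → ((d : ℂ))⁻¹ • ∑ i, ∑ j, (A k i j)ᴴ * (A k i j) = 1)
    (k : ℕ) (hk : k ≤ N) :
    (matHat (rhoChain d D A k)).PosSemidef ∧
    (matHat (rhoChain d D A k)).trace = 1 ∧
    ∀ X ∈ Sspan d D A σ k, (matHat X).IsHermitian ∧ (matHat X).trace = 0 := by
  have trace_chain := trace_transferChain hd hD0 hDN hU hcan hk
  have hweight : ((d : ℂ)⁻¹ • (1 : Matrix (Fin d) (Fin d) ℂ)).PosSemidef :=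
    PosSemidef.one.smul (by simp)
  have chain_mem (α : Fin k → Fin (d * d)) (hα : ∃ t, (α t : ℕ) ≠ 0) :
      matHat (Schain d D A σ k α) ∈ tracelessHermitian (Fin (D k)) := by
    obtain ⟨t, ht⟩ := hα
    rw [matHat_Schain A σ hD0, mem_tracelessHermitian, trace_chain]
    exact ⟨isHermitian_transferChain A fun s => isHermitian_siteWeight hσ0 hσherm (α s),
      Finset.prod_eq_zero (Finset.mem_univ t) (trace_siteWeight_eq_zero hσtr ht)⟩
  refine ⟨?_, ?_, fun X hX => Sspan_le_comap_tracelessHermitian chain_mem hX⟩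
  · rw [matHat_rhoChain A hD0]
    exact posSemidef_transferChain A fun _ => hweight
  · rw [matHat_rhoChain A hD0, trace_chain]
    simp [hd]

/-- If a tensor sequence generates a matrix-product unitary and is in
canonical form, then for every `k = 1, …, N` the matrix `ρ̂^{(k)}` is a normalized
quantum state (positive semidefinite with trace 1) and every `X ∈ 𝒮^{(k)}` gives a
Hermitian traceless matrix `X̂`. -/
theorem stmt_3 (N d : ℕ) (hN : 1 ≤ N) (hd : 2 ≤ d) (D : ℕ → ℕ)
    (hD0 : D 0 = 1) (hDN : D N = 1) (hDpos : ∀ k, k ≤ N → 1 ≤ D k)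
    (A : ∀ k : ℕ, Fin d → Fin d → Matrix (Fin (D (k + 1))) (Fin (D k)) ℂ)
    (σ : Fin (d * d) → Matrix (Fin d) (Fin d) ℂ)
    (hσ0 : ∀ α : Fin (d * d), (α : ℕ) = 0 → σ α = 1)
    (hσherm : ∀ α : Fin (d * d), (α : ℕ) ≠ 0 → (σ α).IsHermitian)
    (hσtr : ∀ α : Fin (d * d), (α : ℕ) ≠ 0 → (σ α).trace = 0)
    (hσorth : ∀ α β : Fin (d * d), (α : ℕ) ≠ 0 → (β : ℕ) ≠ 0 →
      (σ α * σ β).trace = if α = β then 1 else 0)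
    (hσbasis : Submodule.span ℂ (Set.range σ) = ⊤)
    (hU : mpoOp d D A N ∈ Matrix.unitaryGroup (Fin N → Fin d) ℂ)
    (hcan : ∀ k, k < N →
      ((d : ℂ))⁻¹ • ∑ i, ∑ j, (A k i j)ᴴ * (A k i j) = 1) :
    ∀ k, 1 ≤ k → k ≤ N →
      (matHat (rhoChain d D A k)).PosSemidef ∧
      (matHat (rhoChain d D A k)).trace = 1 ∧
      ∀ X ∈ Sspan d D A σ k, (matHat X).IsHermitian ∧ (matHat X).trace = 0 :=
  fun k _ hk => stmt_3_general N d (by omega) D hD0 hDN A σ hσ0 hσherm hσtr hU hcan k hk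

end
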